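/- Let k, i, j be integers with 1 < i < k and j ≥ 1. Set K = k + 2(j−1), S = {j,…,i+j−2} ∪ {i+2(j−1),…,K−1}, and F = {i+j−1,…,i+2(j−1)} (a block of j consecutive elements). The number of permutations σ of {1,…,K} such that σ fixes no prefix of size s for any s ∈ S, and moreover σ({1,…,j}) ≠ F, σ(F) ≠ {1,…,j}, and σ(F) ≠ F, equals c_K^S − 2·j!·c_{k+j−2}^{{i+j−2,…,k+j−3}} + j!·j!·c_{k−2}^{{i−2,…,k−3}} − j!·c_{k+j−2}^{{j,…,k+j−3}}. (Here, when i = 2 the set {i−2,…,k−3} contains 0, and c_{k−2}^{{0,…,k−3}} = 0. These permutations are exactly the subdivergence-free gluings of the tree f_{k,i,j} with itself, with its K leaves labelled from the deepest fan upward so that F is the set of labels of the fan below the extra edge.) -/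

import Mathlib

open Nat Finset

/-- The prefix `{1, …, j}` of `{1, …, n}`. We represent `{1, …, n}` by `Fin n`,
an element `x : Fin n` having label `x.val + 1`; so the prefix of size `j` is the
set of elements with label at most `j`. -/
def pref (n j : ℕ) : Finset (Fin n) :=
  Finset.univ.filter (fun x => x.val + 1 ≤ j)

/-- The segment `{u, …, v}` inside `{1, …, n}` (labels as above). -/
def seg (n u v : ℕ) : Finset (Fin n) :=
  Finset.univ.filter (fun x => u ≤ x.val + 1 ∧ x.val + 1 ≤ v)

/-- A permutation `σ` of `{1, …, n}` fixes a prefix of size `j` if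
`σ({1, …, j}) = {1, …, j}`. -/
def FixesPrefix {n : ℕ} (σ : Equiv.Perm (Fin n)) (j : ℕ) : Prop :=
  (pref n j).image σ = pref n j

/-- `c n`: the number of connected permutations of size `n`, i.e. permutations of
`{1, …, n}` fixing no prefix of size `j` for any `1 ≤ j ≤ n - 1`. -/
noncomputable def c (n : ℕ) : ℕ :=
  Nat.card {σ : Equiv.Perm (Fin n) // ∀ j, 1 ≤ j → j ≤ n - 1 → ¬ FixesPrefix σ j}

/-- `cS n S`: the number of `S`-connected permutations of size `n`, i.e. permutations of
`{1, …, n}` fixing no prefix of size `j` for any `j ∈ S`. -/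
noncomputable def cS (n : ℕ) (S : Finset ℕ) : ℕ :=
  Nat.card {σ : Equiv.Perm (Fin n) // ∀ j ∈ S, ¬ FixesPrefix σ j}

/-!
Deleting a block of `j` consecutive labels from the source and one from the target turns the
permutations carrying the first block onto the second into pairs of a permutation of `j` points and
a permutation of the other points. A prefix lying beyond both blocks is fixed by `σ` if and only if
the prefix shorter by `j` is fixed by the reduced permutation, a prefix lying before both blocks is
unaffected, and a prefix that contains exactly one of the two blocks cannot be fixed. Of the three
forbidden events `σ {1, …, j} = F`, `σ F = {1, …, j}` and `σ F = F`, the last excludes each of the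
other two, so inclusion–exclusion has a single correction term, counted by deleting two blocks in
succession.
-/

/-- The block `{a + 1, …, a + j}` of `j` consecutive labels inside `{1, …, n}`. The offset `a`
counts the labels before the block, so in terms of values of `Fin n` it is
the interval `[a, a + j)`. -/
def block (n a j : ℕ) : Finset (Fin n) :=
  seg n (a + 1) (a + j)

/-- `σ` is an `S`-connected permutation, that is, one of those counted by `cS n S`. -/
def SConnected {n : ℕ} (S : Finset ℕ) (σ : Equiv.Perm (Fin n)) : Prop :=
  ∀ s ∈ S, ¬ FixesPrefix σ s

section PermOfSum

variable {ι β α : Type*} (f g : ι ⊕ β ≃ α)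

/-- The permutation of `α` acting as `μ` from the `ι`-part of `f` to the `ι`-part of `g`, and as `ρ`
from the `β`-part of `f` to the `β`-part of `g`. -/
def permOfSum (μ : Equiv.Perm ι) (ρ : Equiv.Perm β) : Equiv.Perm α :=
  f.equivCongr g (Equiv.Perm.sumCongr μ ρ)

@[simp]
lemma permOfSum_apply_inl (μ : Equiv.Perm ι) (ρ : Equiv.Perm β) (x : ι) :
    permOfSum f g μ ρ (f (Sum.inl x)) = g (Sum.inl (μ x)) := by
  simp [permOfSum]

@[simp]
lemma permOfSum_apply_inr (μ : Equiv.Perm ι) (ρ : Equiv.Perm β) (y : β) :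
    permOfSum f g μ ρ (f (Sum.inr y)) = g (Sum.inr (ρ y)) := by
  simp [permOfSum]

lemma permOfSum_injective :
    Function.Injective fun p : Equiv.Perm ι × Equiv.Perm β ↦ permOfSum f g p.1 p.2 :=
  (f.equivCongr g).injective.comp Equiv.Perm.sumCongrHom_injective

lemma exists_permOfSum_eq [Finite ι] [Finite β] {σ : Equiv.Perm α}
    (hσ : ∀ x, ∃ x', σ (f (Sum.inl x)) = g (Sum.inl x')) :
    ∃ p : Equiv.Perm ι × Equiv.Perm β, permOfSum f g p.1 p.2 = σ := by
  have hmaps : Set.MapsTo ((f.equivCongr g).symm σ) (Set.range Sum.inl) (Set.range Sum.inl) := by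
    rintro _ ⟨x, rfl⟩
    obtain ⟨x', hx'⟩ := hσ x
    exact ⟨x', by simp [hx']⟩
  obtain ⟨p, hp⟩ := Equiv.Perm.mem_sumCongrHom_range_of_perm_mapsTo_inl hmaps
  exact ⟨p, ((Equiv.symm_apply_eq _).1 hp.symm).symm⟩

lemma card_perm_eq_factorial_mul [Finite ι] [Finite β] {P : Equiv.Perm α → Prop}
    {Q : Equiv.Perm β → Prop} (hP : ∀ σ, P σ → ∀ x, ∃ x', σ (f (Sum.inl x)) = g (Sum.inl x'))
    (hPQ : ∀ μ ρ, P (permOfSum f g μ ρ) ↔ Q ρ) :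
    Nat.card {σ // P σ} = (Nat.card ι)! * Nat.card {ρ // Q ρ} := by
  calc Nat.card {σ // P σ}
      = Nat.card {p : Equiv.Perm ι × Equiv.Perm β // P (permOfSum f g p.1 p.2)} :=
        (Nat.card_preimage_of_injective (s := {σ | P σ}) (permOfSum_injective f g)
          fun σ hσ ↦ exists_permOfSum_eq f g (hP σ hσ)).symm
    _ = Nat.card {p : Equiv.Perm ι × Equiv.Perm β // Q p.2} := by simp only [hPQ]
    _ = (Nat.card ι)! * Nat.card {ρ // Q ρ} := by
        rw [← Nat.card_perm, ← Nat.card_prod]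
        exact Nat.card_congr
          ⟨fun p ↦ (p.1.1, ⟨p.1.2, p.2⟩), fun p ↦ ⟨(p.1, p.2.1), p.2.2⟩, fun _ ↦ rfl, fun _ ↦ rfl⟩

end PermOfSum

lemma image_perm_eq_iff {α : Type*} [DecidableEq α] (σ : Equiv.Perm α) {X Y : Finset α} :
    X.image σ = Y ↔ ∀ x, x ∈ X ↔ σ x ∈ Y := by
  constructor
  · rintro rfl x
    simp
  · intro h
    ext y
    obtain ⟨x, rfl⟩ := σ.surjective y
    simp [h x]

lemma image_permOfSum_eq_iff {ι β α : Type*} [DecidableEq β] [DecidableEq α] {f g : ι ⊕ β ≃ α}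
    {μ : Equiv.Perm ι} {ρ : Equiv.Perm β} {X Y : Finset α} {X' Y' : Finset β}
    (hι : ∀ x, f (Sum.inl x) ∈ X ↔ g (Sum.inl (μ x)) ∈ Y)
    (hX : ∀ y, f (Sum.inr y) ∈ X ↔ y ∈ X') (hY : ∀ y, g (Sum.inr y) ∈ Y ↔ y ∈ Y') :
    X.image (permOfSum f g μ ρ) = Y ↔ X'.image ρ = Y' := by
  simp only [image_perm_eq_iff, ← f.forall_congr_right, Sum.forall, permOfSum_apply_inl,
    permOfSum_apply_inr, hι, hX, hY, implies_true, true_and]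

section Blocks

variable {n a b j s : ℕ} {σ : Equiv.Perm (Fin n)}

lemma mem_pref {x : Fin n} : x ∈ pref n j ↔ x.val < j := by
  simp [pref]

lemma mem_block {x : Fin n} : x ∈ block n a j ↔ a ≤ x.val ∧ x.val < a + j := by
  simp [block, seg]

lemma pref_eq_block (n j : ℕ) : pref n j = block n 0 j := by
  ext x
  simp [mem_pref, mem_block]

lemma block_subset_pref_iff (hj : 0 < j) (ha : a + j ≤ n) :
    block n a j ⊆ pref n s ↔ a + j ≤ s := by
  constructor
  · intro h
    have hlast : (⟨a + j - 1, by omega⟩ : Fin n) ∈ pref n s := h <| by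
      simp only [mem_block]
      omega
    simp only [mem_pref] at hlast
    omega
  · intro h x hx
    rw [mem_block] at hx
    rw [mem_pref]
    omega

lemma eq_of_block_eq (hj : 0 < j) (ha : a + j ≤ n) (hb : b + j ≤ n)
    (h : block n a j = block n b j) : a = b := by
  have hab : ∀ s, a + j ≤ s ↔ b + j ≤ s := fun s ↦ by
    rw [← block_subset_pref_iff hj ha, h, block_subset_pref_iff hj hb]
  exact Nat.add_right_cancel (eq_of_forall_ge_iff hab)

lemma FixesPrefix.image_subset_iff (h : FixesPrefix σ s) {X : Finset (Fin n)} :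
    X.image σ ⊆ pref n s ↔ X ⊆ pref n s := by
  conv_lhs => rw [← show (pref n s).image σ = pref n s from h]
  exact Finset.image_subset_image_iff σ.injective

lemma FixesPrefix.add_le_iff_of_image_block (hj : 0 < j) (ha : a + j ≤ n) (hb : b + j ≤ n)
    (hσ : (block n a j).image σ = block n b j) (h : FixesPrefix σ s) :
    a + j ≤ s ↔ b + j ≤ s := by
  rw [← block_subset_pref_iff hj ha, ← block_subset_pref_iff hj hb, ← hσ, h.image_subset_iff]

lemma sConnected_union {S T : Finset ℕ} :
    SConnected (S ∪ T) σ ↔ SConnected S σ ∧ SConnected T σ :=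
  Finset.forall_mem_union

end Blocks

section InsertBlock

variable {m a b j : ℕ}

/-- Splits `{1, …, m + j}` into the block of size `j` at offset `a`, which is `Fin j`, and the
remaining elements in increasing order, which are `Fin m`. -/
noncomputable def blockEquiv (j : ℕ) (ha : a ≤ m) : Fin j ⊕ Fin m ≃ Fin (m + j) :=
  Equiv.ofBijective
    (Sum.elim (fun x ↦ ⟨a + x, by omega⟩)
      (fun y ↦ ⟨if y.val < a then y else y + j, by split_ifs <;> omega⟩)) <| by
    rw [Fintype.bijective_iff_injective_and_card]
    refine ⟨?_, by simp [add_comm]⟩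
    rintro (x | x) (y | y) h <;>
      simp only [Sum.elim_inl, Sum.elim_inr, Sum.inl.injEq, Sum.inr.injEq, Fin.ext_iff,
        reduceCtorEq] at h ⊢ <;>
      grind

@[simp]
lemma val_blockEquiv_inl (ha : a ≤ m) (x : Fin j) :
    (blockEquiv j ha (Sum.inl x)).val = a + x :=
  rfl

@[simp]
lemma val_blockEquiv_inr (ha : a ≤ m) (y : Fin m) :
    (blockEquiv j ha (Sum.inr y)).val = if y.val < a then y.val else y + j :=
  rfl

lemma mem_block_iff_exists_blockEquiv_inl (ha : a ≤ m) {x : Fin (m + j)} :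
    x ∈ block (m + j) a j ↔ ∃ z, x = blockEquiv j ha (Sum.inl z) := by
  constructor
  · intro hx
    rw [mem_block] at hx
    exact ⟨⟨x - a, by omega⟩, Fin.ext (Nat.add_sub_of_le hx.1).symm⟩
  · rintro ⟨z, rfl⟩
    simp [mem_block]

/-- The permutation mapping the block of size `j` at offset `a` onto the one at offset `b` by `μ`,
and the remaining elements, relabelled in increasing order, by `ρ`. -/
noncomputable def insertBlock (ha : a ≤ m) (hb : b ≤ m) (μ : Equiv.Perm (Fin j))
    (ρ : Equiv.Perm (Fin m)) : Equiv.Perm (Fin (m + j)) :=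
  permOfSum (blockEquiv j ha) (blockEquiv j hb) μ ρ

variable (ha : a ≤ m) (hb : b ≤ m) (μ : Equiv.Perm (Fin j)) (ρ : Equiv.Perm (Fin m))

lemma image_insertBlock_block :
    (block (m + j) a j).image (insertBlock ha hb μ ρ) = block (m + j) b j := by
  refine (image_permOfSum_eq_iff (X' := ∅) (Y' := ∅) ?_ ?_ ?_).2 rfl <;> intro x <;>
    simp only [mem_block, val_blockEquiv_inl, val_blockEquiv_inr, Finset.notMem_empty] <;> grind

lemma card_image_block_eq_factorial_mul {P : Equiv.Perm (Fin (m + j)) → Prop}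
    {Q : Equiv.Perm (Fin m) → Prop} (hPQ : ∀ μ ρ, P (insertBlock ha hb μ ρ) ↔ Q ρ) :
    Nat.card {σ : Equiv.Perm (Fin (m + j)) //
      (block (m + j) a j).image σ = block (m + j) b j ∧ P σ} = j ! * Nat.card {ρ // Q ρ} := by
  rw [card_perm_eq_factorial_mul (blockEquiv j ha) (blockEquiv j hb), Nat.card_fin]
  · rintro σ ⟨hσ, -⟩ x
    rw [← mem_block_iff_exists_blockEquiv_inl, ← (image_perm_eq_iff σ).1 hσ,
      mem_block_iff_exists_blockEquiv_inl ha]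
    exact ⟨x, rfl⟩
  · intro μ ρ
    exact (and_iff_right (image_insertBlock_block ha hb μ ρ)).trans (hPQ μ ρ)

lemma image_insertBlock_block_eq_iff {a' b' l l' : ℕ} (haa' : a ≤ a') (hbb' : b' + l' ≤ b) :
    (block (m + j) (a' + j) l).image (insertBlock ha hb μ ρ) = block (m + j) b' l' ↔
      (block m a' l).image ρ = block m b' l' := by
  apply image_permOfSum_eq_iff <;> intro x <;>
    simp only [mem_block, val_blockEquiv_inl, val_blockEquiv_inr] <;> grind

lemma fixesPrefix_insertBlock_add {s : ℕ} (has : a ≤ s) (hbs : b ≤ s) :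
    FixesPrefix (insertBlock ha hb μ ρ) (s + j) ↔ FixesPrefix ρ s := by
  apply image_permOfSum_eq_iff <;> intro x <;>
    simp only [mem_pref, val_blockEquiv_inl, val_blockEquiv_inr] <;> grind

lemma fixesPrefix_insertBlock_of_le {s : ℕ} (hsa : s ≤ a) (hsb : s ≤ b) :
    FixesPrefix (insertBlock ha hb μ ρ) s ↔ FixesPrefix ρ s := by
  apply image_permOfSum_eq_iff <;> intro x <;>
    simp only [mem_pref, val_blockEquiv_inl, val_blockEquiv_inr] <;> grind

lemma sConnected_Ico_insertBlock {l u : ℕ} (hal : a ≤ l) (hbl : b ≤ l) :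
    SConnected (Ico (l + j) (u + j)) (insertBlock ha hb μ ρ) ↔ SConnected (Ico l u) ρ := by
  rw [SConnected, ← Finset.image_add_right_Ico, Finset.forall_mem_image]
  refine forall₂_congr fun s hs ↦ not_congr ?_
  have hls := (Finset.mem_Ico.1 hs).1
  exact fixesPrefix_insertBlock_add ha hb μ ρ (hal.trans hls) (hbl.trans hls)

lemma sConnected_insertBlock_of_le {T : Finset ℕ} (hTa : ∀ s ∈ T, s ≤ a) (hTb : ∀ s ∈ T, s ≤ b) :
    SConnected T (insertBlock ha hb μ ρ) ↔ SConnected T ρ :=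
  forall₂_congr fun s hs ↦
    not_congr (fixesPrefix_insertBlock_of_le ha hb μ ρ (hTa s hs) (hTb s hs))

lemma sConnected_insertBlock_of_separates (hj : 0 < j) {T : Finset ℕ}
    (hT : ∀ s ∈ T, ¬ (a + j ≤ s ↔ b + j ≤ s)) : SConnected T (insertBlock ha hb μ ρ) :=
  fun s hs hfix ↦ hT s hs <| hfix.add_le_iff_of_image_block hj (by omega) (by omega)
    (image_insertBlock_block ha hb μ ρ)

end InsertBlock

section Counting

variable {m a b j l u : ℕ} {T : Finset ℕ}

lemma card_sConnected_image_block_of_separates (hj : 0 < j) (ha : a ≤ m) (hb : b ≤ m)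
    (hal : a ≤ l) (hbl : b ≤ l) (hT : ∀ s ∈ T, ¬ (a + j ≤ s ↔ b + j ≤ s)) :
    Nat.card {σ : Equiv.Perm (Fin (m + j)) // (block (m + j) a j).image σ = block (m + j) b j ∧
      SConnected (T ∪ Ico (l + j) (u + j)) σ} = j ! * cS m (Ico l u) :=
  card_image_block_eq_factorial_mul ha hb fun μ ρ ↦ by
    rw [sConnected_union, and_iff_right (sConnected_insertBlock_of_separates ha hb μ ρ hj hT)]
    exact sConnected_Ico_insertBlock ha hb μ ρ hal hbl

lemma card_sConnected_image_block_self (ha : a ≤ m) (hal : a ≤ l) (hT : ∀ s ∈ T, s ≤ a) :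
    Nat.card {σ : Equiv.Perm (Fin (m + j)) // (block (m + j) a j).image σ = block (m + j) a j ∧
      SConnected (T ∪ Ico (l + j) (u + j)) σ} = j ! * cS m (T ∪ Ico l u) :=
  card_image_block_eq_factorial_mul ha ha fun μ ρ ↦ by
    rw [sConnected_union, sConnected_insertBlock_of_le ha ha μ ρ hT hT,
      sConnected_Ico_insertBlock ha ha μ ρ hal hal, ← sConnected_union]
    rfl

lemma card_sConnected_swap_blocks {p r : ℕ} (hj : 0 < j) (hr : r ≤ p)
    (hT : ∀ s ∈ T, ¬ (j ≤ s ↔ r + j + j ≤ s)) :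
    Nat.card {σ : Equiv.Perm (Fin (p + j + j)) //
      (block (p + j + j) 0 j).image σ = block (p + j + j) (r + j) j ∧
      (block (p + j + j) (r + j) j).image σ = block (p + j + j) 0 j ∧
      SConnected (T ∪ Ico (r + j + j) (u + j + j)) σ} = j ! * (j ! * cS p (Ico r u)) := by
  have hdelete : Nat.card {ρ : Equiv.Perm (Fin (p + j)) //
      (block (p + j) r j).image ρ = block (p + j) 0 j ∧ SConnected (Ico (r + j) (u + j)) ρ} =
      j ! * cS p (Ico r u) := by
    simpa using card_sConnected_image_block_of_separates (T := ∅) (u := u) hj hr p.zero_le le_rfl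
      r.zero_le (by simp)
  rw [← hdelete]
  refine card_image_block_eq_factorial_mul (p + j).zero_le (by omega) fun μ ρ ↦ ?_
  rw [image_insertBlock_block_eq_iff _ _ μ ρ r.zero_le (by omega), sConnected_union,
    and_iff_right (sConnected_insertBlock_of_separates _ _ μ ρ hj (by simpa using hT)),
    sConnected_Ico_insertBlock _ _ μ ρ (r + j).zero_le le_rfl]

lemma card_and_not_and_not_and_not {α : Type*} [Finite α] (S A B C : α → Prop)
    (hAC : ∀ x, A x → ¬ C x) (hBC : ∀ x, B x → ¬ C x) :
    (Nat.card {x // S x ∧ ¬ A x ∧ ¬ B x ∧ ¬ C x} : ℤ) =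
      Nat.card {x // S x} - Nat.card {x // A x ∧ S x} - Nat.card {x // B x ∧ S x}
        + Nat.card {x // A x ∧ B x ∧ S x} - Nat.card {x // C x ∧ S x} := by
  classical
  have := Fintype.ofFinite α
  simp only [Nat.card_eq_fintype_card, Fintype.card_subtype, Finset.natCast_card_filter,
    ← Finset.sum_sub_distrib, ← Finset.sum_add_distrib]
  refine Finset.sum_congr rfl fun x _ ↦ ?_
  specialize hAC x
  specialize hBC x
  by_cases S x <;> by_cases A x <;> by_cases B x <;> by_cases C x <;> simp_all

lemma card_sConnected_avoiding_blocks {p r : ℕ} (hj : 0 < j) (hr : r ≤ p)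
    (hT : ∀ s ∈ T, j ≤ s ∧ s ≤ r + j) :
    (Nat.card {σ : Equiv.Perm (Fin (p + j + j)) //
      SConnected (T ∪ Ico (r + j + j) (u + j + j)) σ ∧
      (block (p + j + j) 0 j).image σ ≠ block (p + j + j) (r + j) j ∧
      (block (p + j + j) (r + j) j).image σ ≠ block (p + j + j) 0 j ∧
      (block (p + j + j) (r + j) j).image σ ≠ block (p + j + j) (r + j) j} : ℤ) =
      cS (p + j + j) (T ∪ Ico (r + j + j) (u + j + j))
        - 2 * j ! * cS (p + j) (Ico (r + j) (u + j)) + j ! * j ! * cS p (Ico r u)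
        - j ! * cS (p + j) (T ∪ Ico (r + j) (u + j)) := by
  have hne : block (p + j + j) 0 j ≠ block (p + j + j) (r + j) j := fun h ↦ by
    have := eq_of_block_eq hj (by omega) (by omega) h
    omega
  have hsep : ∀ s ∈ T, ¬ (0 + j ≤ s ↔ r + j + j ≤ s) := fun s hs ↦ by
    have := hT s hs
    omega
  have hcount := card_and_not_and_not_and_not
    (SConnected (n := p + j + j) (T ∪ Ico (r + j + j) (u + j + j)))
    (fun σ ↦ (block _ 0 j).image σ = block _ (r + j) j)
    (fun σ ↦ (block _ (r + j) j).image σ = block _ 0 j)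
    (fun σ ↦ (block _ (r + j) j).image σ = block _ (r + j) j)
    (fun σ hA hC ↦ hne (Finset.image_injective σ.injective (hA.trans hC.symm)))
    (fun σ hB hC ↦ hne (hB.symm.trans hC))
  rw [card_sConnected_image_block_of_separates hj (by omega) (by omega) (by omega) le_rfl hsep,
    card_sConnected_image_block_of_separates hj (by omega) (by omega) le_rfl (by omega)
      (by simpa only [Iff.comm] using hsep),
    card_sConnected_swap_blocks hj hr (by simpa using hsep),
    card_sConnected_image_block_self (by omega) le_rfl fun s hs ↦ (hT s hs).2] at hcount
  refine hcount.trans ?_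
  simp only [cS, SConnected]
  push_cast
  ring

end Counting

/-- Subdivergence-free gluings of `f_{k,i,j}` with itself, `1 < i < k`, `j ≥ 1`.
With `K = k + 2(j−1)`, `S = {j,…,i+j−2} ∪ {i+2(j−1),…,K−1}` and `F = {i+j−1,…,i+2(j−1)}`,
the number of permutations `σ` of `{1,…,K}` fixing no prefix of size `s ∈ S` and with
`σ({1,…,j}) ≠ F`, `σ(F) ≠ {1,…,j}`, `σ(F) ≠ F`, equals
`c_K^S − 2·j!·c_{k+j−2}^{{i+j−2,…,k+j−3}} + j!·j!·c_{k−2}^{{i−2,…,k−3}} − j!·c_{k+j−2}^{{j,…,k+j−3}}`. -/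
theorem line_with_extra_big_fan (k i j : ℕ) (h1 : 1 < i) (h2 : i < k) (hj : 1 ≤ j) :
    (Nat.card {σ : Equiv.Perm (Fin (k + 2 * (j - 1))) //
      (∀ s ∈ Finset.Icc j (i + j - 2) ∪
          Finset.Icc (i + 2 * (j - 1)) (k + 2 * (j - 1) - 1), ¬ FixesPrefix σ s) ∧
      (pref (k + 2 * (j - 1)) j).image σ ≠
        seg (k + 2 * (j - 1)) (i + j - 1) (i + 2 * (j - 1)) ∧
      (seg (k + 2 * (j - 1)) (i + j - 1) (i + 2 * (j - 1))).image σ ≠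
        pref (k + 2 * (j - 1)) j ∧
      (seg (k + 2 * (j - 1)) (i + j - 1) (i + 2 * (j - 1))).image σ ≠
        seg (k + 2 * (j - 1)) (i + j - 1) (i + 2 * (j - 1))} : ℤ)
    = (cS (k + 2 * (j - 1))
        (Finset.Icc j (i + j - 2) ∪
          Finset.Icc (i + 2 * (j - 1)) (k + 2 * (j - 1) - 1)) : ℤ)
      - 2 * (j ! : ℤ) * (cS (k + j - 2) (Finset.Icc (i + j - 2) (k + j - 3)) : ℤ)
      + (j ! : ℤ) * (j ! : ℤ) * (cS (k - 2) (Finset.Icc (i - 2) (k - 3)) : ℤ)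
      - (j ! : ℤ) * (cS (k + j - 2) (Finset.Icc j (k + j - 3)) : ℤ) := by
  obtain ⟨r, rfl⟩ := Nat.exists_eq_add_of_le' h1
  obtain ⟨p, rfl⟩ := Nat.exists_eq_add_of_le' (h1.trans h2)
  have hK : p + 2 + 2 * (j - 1) = p + j + j := by omega
  have hF (n : ℕ) : seg n (r + 2 + j - 1) (r + 2 + 2 * (j - 1)) = block n (r + j) j := by
    rw [block, show r + 2 + j - 1 = r + j + 1 by omega,
      show r + 2 + 2 * (j - 1) = r + j + j by omega]
  have hIcc_union : Icc j (r + 2 + j - 2) ∪ Icc (r + 2 + 2 * (j - 1)) (p + 2 + 2 * (j - 1) - 1) =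
      Icc j (r + j) ∪ Ico (r + j + j) (p + j + j) := by
    grind
  have hIcc_single : Icc (r + 2 + j - 2) (p + 2 + j - 3) = Ico (r + j) (p + j) := by grind
  have hIcc_swap : Icc (r + 2 - 2) (p + 2 - 3) = Ico r p := by grind
  have hIcc_self : Icc j (p + 2 + j - 3) = Icc j (r + j) ∪ Ico (r + j) (p + j) := by grind
  rw [hIcc_union, hIcc_single, hIcc_swap, hIcc_self, hK, hF, pref_eq_block,
    show p + 2 + j - 2 = p + j by omega, Nat.add_sub_cancel]
  exact card_sConnected_avoiding_blocks hj (by omega) fun s hs ↦ Finset.mem_Icc.1 hs
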